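/- arXiv:1408.1843 — 2 statements merged into one kernel-verified Lean document; each statement's English description precedes it below -/
import Mathlib

section
/- Let (X, ≤) be a poset and M : X → 𝒫(𝒫(X)) a map such that the presentation (X, ≤, M) is monotone and transitive. Then for every downset S of (X, ≤), cl(cl(S)) ⊆ cl(S), where cl(S) := {x ∈ X | ∃ D ∈ M(x), D ⊆ S}. -/
/-- The refinement relation: `A ≪ B` iff every element of `A` is below some element of `B`. -/
def Refines {X : Type*} [Preorder X] (A B : Set X) : Prop :=
  ∀ a ∈ A, ∃ b ∈ B, a ≤ b

/-- A presentation `(X, ≤, M)` is monotone if whenever `y ≤ x` and `C ∈ M(x)`,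
there is some `D ∈ M(y)` with `D ≪ C`. -/
def MonotonePres {X : Type*} [Preorder X] (M : X → Set (Set X)) : Prop :=
  ∀ x y : X, y ≤ x → ∀ C ∈ M x, ∃ D ∈ M y, Refines D C

/-- A presentation `(X, ≤, M)` is transitive if for every `x`, every `C ∈ M(x)`,
and every family `{D_c | c ∈ C}` with `D_c ∈ M(c)` for each `c ∈ C`, there exists
`E ∈ M(x)` with `E ≪ ⋃_{c ∈ C} D_c`. -/
def TransitivePres {X : Type*} [Preorder X] (M : X → Set (Set X)) : Prop :=
  ∀ x : X, ∀ C ∈ M x, ∀ D : X → Set X, (∀ c ∈ C, D c ∈ M c) →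
    ∃ E ∈ M x, Refines E (⋃ c ∈ C, D c)

/-- The closure map `cl(S) := {x ∈ X | ∃ D ∈ M(x), D ⊆ S}`. -/
def clP {X : Type*} (M : X → Set (Set X)) (S : Set X) : Set X :=
  {x : X | ∃ D ∈ M x, D ⊆ S}

/-- If the presentation `(X, ≤, M)` is monotone and transitive,
then `cl(cl(S)) ⊆ cl(S)` for every downset `S`. -/
theorem clP_clP_subset_clP {X : Type*} [PartialOrder X]
    (M : X → Set (Set X)) (hmono : MonotonePres M) (htrans : TransitivePres M)
    (S : Set X) (hS : IsLowerSet S) : clP M (clP M S) ⊆ clP M S := by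
  rintro x ⟨C, hC, hCS⟩
  have h : ∀ c ∈ C, ∃ D ∈ M c, D ⊆ S := fun c hc => hCS hc
  choose! D hD hDS using h
  obtain ⟨E, hE, hr⟩ := htrans x C hC D hD
  refine ⟨E, hE, fun e he => ?_⟩
  obtain ⟨b, hb, heb⟩ := hr e he
  obtain ⟨c, hc, hbc⟩ := Set.mem_iUnion₂.mp hb
  exact hS heb (hDS c hc hbc)
end

section
/- Let (X, ≤) be a poset and M : X → 𝒫(𝒫(X)) a map such that the presentation (X, ≤, M) is direct (i.e., monotone, reflexive, and transitive). Then the map sending a downset S of (X, ≤) to cl(S) := {x ∈ X | ∃ D ∈ M(x), D ⊆ S} is a well-defined closure operator on the complete lattice of downsets of (X, ≤) ordered by inclusion: it maps downsets to downsets, is order-preserving, extensive (S ⊆ cl(S)), and idempotent (cl(cl(S)) = cl(S)). -/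
/-- A presentation `(X, ≤, M)` is reflexive if for each `x` there is some
`C ∈ M(x)` with `C ≪ {x}`. -/
def ReflexivePres {X : Type*} [Preorder X] (M : X → Set (Set X)) : Prop :=
  ∀ x : X, ∃ C ∈ M x, Refines C {x}

/-- If the presentation `(X, ≤, M)` is direct (monotone, reflexive
and transitive), then `cl` is a well-defined closure operator on the lattice of
downsets of `(X, ≤)` ordered by inclusion: it maps downsets to downsets, is
order-preserving, extensive, and idempotent. -/
theorem clP_closureOperator_of_direct {X : Type*} [PartialOrder X]
    (M : X → Set (Set X)) (hmono : MonotonePres M) (hrefl : ReflexivePres M)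
    (htrans : TransitivePres M) :
    (∀ S : Set X, IsLowerSet S → IsLowerSet (clP M S)) ∧
    (∀ S T : Set X, IsLowerSet S → IsLowerSet T → S ⊆ T → clP M S ⊆ clP M T) ∧
    (∀ S : Set X, IsLowerSet S → S ⊆ clP M S) ∧
    (∀ S : Set X, IsLowerSet S → clP M (clP M S) = clP M S) := by
  have key : ∀ S : Set X, IsLowerSet S → ∀ A B : Set X, Refines A B → B ⊆ S → A ⊆ S := by
    intro S hS A B hAB hB a ha
    obtain ⟨b, hb, hab⟩ := hAB a ha
    exact hS hab (hB hb)
  have hext : ∀ S : Set X, IsLowerSet S → S ⊆ clP M S := by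
    intro S hS x hx
    obtain ⟨C, hC, hCx⟩ := hrefl x
    exact ⟨C, hC, key S hS C {x} hCx (Set.singleton_subset_iff.mpr hx)⟩
  have hm : ∀ S T : Set X, S ⊆ T → clP M S ⊆ clP M T := by
    rintro S T hST x ⟨D, hD, hDS⟩
    exact ⟨D, hD, hDS.trans hST⟩
  refine ⟨?_, fun S T _ _ h => hm S T h, hext, ?_⟩
  · rintro S hS x y hyx ⟨C, hC, hCS⟩
    obtain ⟨D, hD, hDC⟩ := hmono x y hyx C hC
    exact ⟨D, hD, key S hS D C hDC hCS⟩
  · intro S hS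
    refine Set.Subset.antisymm ?_ (hm _ _ (hext S hS))
    rintro x ⟨C, hC, hCS⟩
    have h : ∀ c : X, ∃ D : Set X, c ∈ C → D ∈ M c ∧ D ⊆ S := by
      intro c
      by_cases hc : c ∈ C
      · obtain ⟨D, hD, hDS⟩ := hCS hc
        exact ⟨D, fun _ => ⟨hD, hDS⟩⟩
      · exact ⟨∅, fun h => absurd h hc⟩
    choose D hD using h
    obtain ⟨E, hE, hED⟩ := htrans x C hC D (fun c hc => (hD c hc).1)
    exact ⟨E, hE, key S hS E _ hED (Set.iUnion₂_subset fun c hc => (hD c hc).2)⟩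
end
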